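/- arXiv:cs/0207086 — 3 statements merged into one kernel-verified Lean document; each statement's English description precedes it below -/
import Mathlib

section
/- Soundness of defeasible logic DL: for every propositional defeasible theory T and every conclusion c (of one of the forms +Δq, -Δq, +∂q, -∂q for a literal q), if T ⊢ c then c holds in every defeasible model of T; that is, if T ⊢ +Δq then M_Δ(q)=True in every model M of T, if T ⊢ -Δq then M_Δ(q)=False in every model, if T ⊢ +∂q then M_∂(q)=True in every model, and if T ⊢ -∂q then M_∂(q)=False in every model. -/
/-- A literal is an atom or its negation. -/
inductive Lit (Atom : Type) where
  | pos : Atom → Lit Atom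
  | neg : Atom → Lit Atom
  deriving DecidableEq

/-- The complement `~q` of a literal `q`. -/
def Lit.compl {Atom : Type} : Lit Atom → Lit Atom
  | .pos a => .neg a
  | .neg a => .pos a

/-- The three kinds of rules: strict, defeasible, defeater. -/
inductive RuleKind where
  | strict
  | defeasible
  | defeater
  deriving DecidableEq

/-- A rule: a kind, a finite set of literals as body (antecedent), and a head literal. -/
structure DRule (Atom : Type) where
  kind : RuleKind
  body : Finset (Lit Atom)
  head : Lit Atom
  deriving DecidableEq

/-- A rule is strict-or-defeasible (a "supportive" rule). -/
def DRule.isSd {Atom : Type} (r : DRule Atom) : Prop :=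
  r.kind = RuleKind.strict ∨ r.kind = RuleKind.defeasible

/-- A propositional defeasible theory: finite set of facts, finite set of rules,
and a superiority relation on rules. -/
structure DTheory (Atom : Type) where
  facts : Finset (Lit Atom)
  rules : Finset (DRule Atom)
  sup : DRule Atom → DRule Atom → Prop

/-- Acyclicity of the superiority relation. -/
def SupAcyclic {Atom : Type} (T : DTheory Atom) : Prop :=
  ∀ r : DRule Atom, ¬ Relation.TransGen T.sup r r

/-- Conclusions: tagged literals +Δq, -Δq, +∂q, -∂q. -/
inductive Concl (Atom : Type) where
  | plusDelta : Lit Atom → Concl Atom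
  | minusDelta : Lit Atom → Concl Atom
  | plusPartial : Lit Atom → Concl Atom
  | minusPartial : Lit Atom → Concl Atom
  deriving DecidableEq

/-- The inference rules of DL: `Licensed T prev c` holds when the conclusion `c`
may be appended to a derivation whose preceding part is `prev`. -/
def Licensed {Atom : Type} (T : DTheory Atom)
    (prev : List (Concl Atom)) : Concl Atom → Prop
  | .plusDelta q =>
      q ∈ T.facts ∨
      ∃ r ∈ T.rules, r.kind = RuleKind.strict ∧ r.head = q ∧
        ∀ a ∈ r.body, Concl.plusDelta a ∈ prev
  | .minusDelta q =>
      q ∉ T.facts ∧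
      ∀ r ∈ T.rules, r.kind = RuleKind.strict → r.head = q →
        ∃ a ∈ r.body, Concl.minusDelta a ∈ prev
  | .plusPartial q =>
      (Concl.plusDelta q ∈ prev) ∨
      ((∃ r ∈ T.rules, r.isSd ∧ r.head = q ∧
          ∀ a ∈ r.body, Concl.plusPartial a ∈ prev) ∧
       (Concl.minusDelta q.compl ∈ prev) ∧
       ∀ s ∈ T.rules, s.head = q.compl →
         ((∃ a ∈ s.body, Concl.minusPartial a ∈ prev) ∨
          (∃ t ∈ T.rules, t.isSd ∧ t.head = q ∧ T.sup t s ∧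
            ∀ a ∈ t.body, Concl.plusPartial a ∈ prev)))
  | .minusPartial q =>
      (Concl.minusDelta q ∈ prev) ∧
      ((∀ r ∈ T.rules, r.isSd → r.head = q →
          ∃ a ∈ r.body, Concl.minusPartial a ∈ prev) ∨
       (Concl.plusDelta q.compl ∈ prev) ∨
       (∃ s ∈ T.rules, s.head = q.compl ∧
          (∀ a ∈ s.body, Concl.plusPartial a ∈ prev) ∧
          ∀ t ∈ T.rules, t.isSd → t.head = q →
            ((∃ a ∈ t.body, Concl.minusPartial a ∈ prev) ∨ ¬ T.sup t s)))

/-- A derivation: each element of the sequence is licensed given the preceding part. -/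
def DLDerivation {Atom : Type} (T : DTheory Atom)
    (P : List (Concl Atom)) : Prop :=
  ∀ i : Fin P.length, Licensed T (P.take i) (P.get i)

/-- `T ⊢ c`: some derivation in `T` ends with conclusion `c`. -/
def DLProves {Atom : Type} (T : DTheory Atom) (c : Concl Atom) : Prop :=
  ∃ P : List (Concl Atom), DLDerivation T P ∧ P.getLast? = some c

/-- A defeasible interpretation: two partial functions from literals to booleans
(modelled as `Option Bool`-valued functions), `del` for definite knowledge (Δ) and
`par` for defeasible belief (∂). -/
structure DInterp (Atom : Type) where
  del : Lit Atom → Option Bool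
  par : Lit Atom → Option Bool

/-- The coherence conditions on defeasible interpretations: what is known is believed,
and what is not believed is not known. -/
def DInterp.Coherent {Atom : Type} (I : DInterp Atom) : Prop :=
  (∀ q : Lit Atom, I.del q = some true → I.par q = some true) ∧
  (∀ q : Lit Atom, I.par q = some false → I.del q = some false)

open Classical in
/-- Kleene conjunction of a partial boolean function over a finite set of literals:
`False` if some member maps to `False`, `True` if every member maps to `True`,
undefined otherwise. -/
noncomputable def kleeneAll {Atom : Type} (f : Lit Atom → Option Bool)
    (S : Finset (Lit Atom)) : Option Bool :=
  if ∃ a ∈ S, f a = some false then some false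
  else if ∀ a ∈ S, f a = some true then some true
  else none

/-- The four model conditions (MΔ+), (MΔ-), (M∂+), (M∂-). -/
def ModelConditions {Atom : Type} (T : DTheory Atom)
    (I : DInterp Atom) : Prop :=
  (∀ q : Lit Atom,
    I.del q = some true ↔
      (q ∈ T.facts ∨
       ∃ r ∈ T.rules, r.kind = RuleKind.strict ∧ r.head = q ∧
         kleeneAll I.del r.body = some true)) ∧
  (∀ q : Lit Atom,
    I.del q = some false ↔
      (q ∉ T.facts ∧
       ∀ r ∈ T.rules, r.kind = RuleKind.strict → r.head = q →
         kleeneAll I.del r.body = some false)) ∧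
  (∀ q : Lit Atom,
    I.par q = some true ↔
      (I.del q = some true ∨
       ((∃ r ∈ T.rules, r.isSd ∧ r.head = q ∧ kleeneAll I.par r.body = some true) ∧
        I.del q.compl = some false ∧
        ∀ s ∈ T.rules, s.head = q.compl →
          (kleeneAll I.par s.body = some false ∨
           ∃ t ∈ T.rules, t.isSd ∧ t.head = q ∧
             kleeneAll I.par t.body = some true ∧ T.sup t s)))) ∧
  (∀ q : Lit Atom,
    I.par q = some false ↔
      (I.del q = some false ∧
       ((∀ r ∈ T.rules, r.isSd → r.head = q → kleeneAll I.par r.body = some false) ∨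
        I.del q.compl = some true ∨
        (∃ s ∈ T.rules, s.head = q.compl ∧ kleeneAll I.par s.body = some true ∧
          ∀ t ∈ T.rules, t.isSd → t.head = q →
            (kleeneAll I.par t.body = some false ∨ ¬ T.sup t s)))))

/-- A defeasible model of `T`: a defeasible interpretation (coherent pair of partial
functions) satisfying the four model conditions. -/
def IsModel {Atom : Type} (T : DTheory Atom) (I : DInterp Atom) : Prop :=
  I.Coherent ∧ ModelConditions T I

/-- A conclusion holds in an interpretation. -/
def DLHolds {Atom : Type} (I : DInterp Atom) : Concl Atom → Prop
  | .plusDelta q => I.del q = some true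
  | .minusDelta q => I.del q = some false
  | .plusPartial q => I.par q = some true
  | .minusPartial q => I.par q = some false


theorem kleeneAll_true_of {Atom : Type} {f : Lit Atom → Option Bool} {S : Finset (Lit Atom)}
    (h : ∀ a ∈ S, f a = some true) : kleeneAll f S = some true := by
  unfold kleeneAll
  rw [if_neg, if_pos h]
  rintro ⟨a, ha, hf⟩
  rw [h a ha] at hf
  simp at hf

theorem kleeneAll_false_of {Atom : Type} {f : Lit Atom → Option Bool} {S : Finset (Lit Atom)}
    (h : ∃ a ∈ S, f a = some false) : kleeneAll f S = some false := by
  unfold kleeneAll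
  rw [if_pos h]

theorem licensed_holds {Atom : Type} (T : DTheory Atom) (I : DInterp Atom)
    (hI : IsModel T I) (prev : List (Concl Atom)) (hprev : ∀ c ∈ prev, DLHolds I c)
    (c : Concl Atom) (hc : Licensed T prev c) : DLHolds I c := by
  obtain ⟨-, m1, m2, m3, m4⟩ := hI
  have tt : ∀ S : Finset (Lit Atom), (∀ a ∈ S, Concl.plusPartial a ∈ prev) →
      kleeneAll I.par S = some true :=
    fun S h => kleeneAll_true_of fun a ha => hprev _ (h a ha)
  have ff : ∀ S : Finset (Lit Atom), (∃ a ∈ S, Concl.minusPartial a ∈ prev) →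
      kleeneAll I.par S = some false :=
    fun S ⟨a, ha, h⟩ => kleeneAll_false_of ⟨a, ha, hprev _ h⟩
  cases c with
  | plusDelta q =>
    refine (m1 q).2 ?_
    rcases hc with h | ⟨r, hr, hk, hh, hb⟩
    · exact Or.inl h
    · exact Or.inr ⟨r, hr, hk, hh, kleeneAll_true_of fun a ha => hprev _ (hb a ha)⟩
  | minusDelta q =>
    refine (m2 q).2 ⟨hc.1, fun r hr hk hh => ?_⟩
    obtain ⟨a, ha, h⟩ := hc.2 r hr hk hh
    exact kleeneAll_false_of ⟨a, ha, hprev _ h⟩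
  | plusPartial q =>
    refine (m3 q).2 ?_
    rcases hc with h | ⟨⟨r, hr, hk, hh, hb⟩, hd, hs⟩
    · exact Or.inl (hprev _ h)
    · refine Or.inr ⟨⟨r, hr, hk, hh, tt _ hb⟩, hprev _ hd, fun s hsr hsh => ?_⟩
      rcases hs s hsr hsh with h | ⟨t, ht, htk, hth, hts, htb⟩
      · exact Or.inl (ff _ h)
      · exact Or.inr ⟨t, ht, htk, hth, tt _ htb, hts⟩
  | minusPartial q =>
    refine (m4 q).2 ⟨hprev _ hc.1, ?_⟩
    rcases hc.2 with h | h | ⟨s, hs, hsh, hsb, h⟩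
    · exact Or.inl fun r hr hk hh => ff _ (h r hr hk hh)
    · exact Or.inr (Or.inl (hprev _ h))
    · exact Or.inr (Or.inr ⟨s, hs, hsh, tt _ hsb,
        fun t ht hk hh => (h t ht hk hh).imp (ff _) id⟩)

theorem derivation_holds {Atom : Type} (T : DTheory Atom) (I : DInterp Atom)
    (hI : IsModel T I) (P : List (Concl Atom)) (hP : DLDerivation T P) :
    ∀ n (hn : n < P.length), DLHolds I P[n] := by
  intro n
  induction n using Nat.strong_induction_on with
  | _ n ih =>
    intro hn
    refine licensed_holds T I hI (P.take n) ?_ _ (hP ⟨n, hn⟩)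
    intro c hc
    obtain ⟨j, hj, rfl⟩ := List.mem_iff_getElem.1 hc
    rw [List.getElem_take]
    rw [List.length_take] at hj
    exact ih j (by omega) (by omega)

/-- Soundness of DL: every provable conclusion holds in every defeasible model. -/
theorem DL_soundness {Atom : Type} [Countable Atom] [DecidableEq Atom]
    (T : DTheory Atom) (hacyc : SupAcyclic T) (c : Concl Atom)
    (h : DLProves T c) :
    ∀ I : DInterp Atom, IsModel T I → DLHolds I c := by
  intro I hI
  obtain ⟨P, hP, hl⟩ := h
  obtain ⟨n, hn, rfl⟩ := List.mem_iff_getElem.1 (List.mem_of_getLast? hl)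
  exact derivation_holds T I hI P hP n hn
end

section
/- Completeness of defeasible logic DL: for every propositional defeasible theory T and every conclusion c (of one of the forms +Δq, -Δq, +∂q, -∂q for a literal q), if c holds in every defeasible model of T (that is, for all models M: M_Δ(q)=True when c=+Δq, M_Δ(q)=False when c=-Δq, M_∂(q)=True when c=+∂q, M_∂(q)=False when c=-∂q), then T ⊢ c. -/
theorem kleeneAll_true {Atom : Type} (f : Lit Atom → Option Bool) (S : Finset (Lit Atom)) :
    kleeneAll f S = some true ↔ ∀ a ∈ S, f a = some true := by
  unfold kleeneAll
  split_ifs with h1 h2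
  · obtain ⟨a, ha, hf⟩ := h1
    constructor
    · intro h
      simp at h
    · intro h
      have := h a ha
      simp [hf] at this
  · simpa using h2
  · simpa using h2

theorem kleeneAll_false {Atom : Type} (f : Lit Atom → Option Bool) (S : Finset (Lit Atom)) :
    kleeneAll f S = some false ↔ ∃ a ∈ S, f a = some false := by
  unfold kleeneAll
  split_ifs with h1 h2
  · simpa using h1
  · simpa using h1
  · simpa using h1

theorem Licensed.mono {Atom : Type} {T : DTheory Atom} {P Q : List (Concl Atom)}
    (hs : ∀ x ∈ P, x ∈ Q) {c : Concl Atom} (h : Licensed T P c) : Licensed T Q c := by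
  cases c with
  | plusDelta q =>
    rcases h with h | ⟨r, hr, hk, hh, hb⟩
    · exact Or.inl h
    · exact Or.inr ⟨r, hr, hk, hh, fun a ha => hs _ (hb a ha)⟩
  | minusDelta q =>
    refine ⟨h.1, fun r hr hk hh => ?_⟩
    obtain ⟨a, ha, hp⟩ := h.2 r hr hk hh
    exact ⟨a, ha, hs _ hp⟩
  | plusPartial q =>
    rcases h with h | ⟨⟨r, hr, hk, hh, hb⟩, hd, hall⟩
    · exact Or.inl (hs _ h)
    · refine Or.inr ⟨⟨r, hr, hk, hh, fun a ha => hs _ (hb a ha)⟩, hs _ hd, fun s hs1 hs2 => ?_⟩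
      rcases hall s hs1 hs2 with ⟨a, ha, hp⟩ | ⟨t, ht, h1, h2, h3, h4⟩
      · exact Or.inl ⟨a, ha, hs _ hp⟩
      · exact Or.inr ⟨t, ht, h1, h2, h3, fun a ha => hs _ (h4 a ha)⟩
  | minusPartial q =>
    obtain ⟨h0, h⟩ := h
    refine ⟨hs _ h0, ?_⟩
    rcases h with h | h | ⟨s, hs1, hs2, hb, hall⟩
    · refine Or.inl fun r hr hk hh => ?_
      obtain ⟨a, ha, hp⟩ := h r hr hk hh
      exact ⟨a, ha, hs _ hp⟩
    · exact Or.inr (Or.inl (hs _ h))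
    · refine Or.inr (Or.inr ⟨s, hs1, hs2, fun a ha => hs _ (hb a ha), fun t ht h1 h2 => ?_⟩)
      rcases hall t ht h1 h2 with ⟨a, ha, hp⟩ | h
      · exact Or.inl ⟨a, ha, hs _ hp⟩
      · exact Or.inr h

theorem DLDerivation.append {Atom : Type} {T : DTheory Atom} {P Q : List (Concl Atom)}
    (hP : DLDerivation T P) (hQ : DLDerivation T Q) : DLDerivation T (P ++ Q) := by
  rintro ⟨i, hi⟩
  by_cases h : i < P.length
  · have := hP ⟨i, h⟩
    simp only [List.get_eq_getElem] at this ⊢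
    rw [List.getElem_append_left h, List.take_append_of_le_length h.le]
    exact this
  · push Not at h
    have hi' : i - P.length < Q.length := by
      simp at hi
      omega
    have := hQ ⟨i - P.length, hi'⟩
    simp only [List.get_eq_getElem] at this ⊢
    rw [List.getElem_append_right h]
    refine this.mono fun x hx => ?_
    rw [List.take_append]
    exact List.mem_append_right _ hx

theorem DLDerivation.snoc {Atom : Type} {T : DTheory Atom} {P : List (Concl Atom)}
    {c : Concl Atom} (hP : DLDerivation T P) (hc : Licensed T P c) :
    DLDerivation T (P ++ [c]) := by
  rintro ⟨i, hi⟩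
  by_cases h : i < P.length
  · have := hP ⟨i, h⟩
    simp only [List.get_eq_getElem] at this ⊢
    rw [List.getElem_append_left h, List.take_append_of_le_length h.le]
    exact this
  · have : i = P.length := by
      simp at hi
      omega
    subst this
    simpa using hc

theorem DLDerivation.take {Atom : Type} {T : DTheory Atom} {P : List (Concl Atom)}
    (hP : DLDerivation T P) (n : ℕ) : DLDerivation T (P.take n) := by
  rintro ⟨i, hi⟩
  have hi2 : i < n ∧ i < P.length := by simpa using hi
  have := hP ⟨i, hi2.2⟩
  simp only [List.get_eq_getElem] at this ⊢
  rw [List.getElem_take, List.take_take, min_eq_left hi2.1.le]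
  exact this

/-- Membership in a derivation. -/
def Prov {Atom : Type} (T : DTheory Atom) (c : Concl Atom) : Prop :=
  ∃ P, DLDerivation T P ∧ c ∈ P

theorem DLDerivation.licensed {Atom : Type} {T : DTheory Atom} {P : List (Concl Atom)}
    (hP : DLDerivation T P) {c : Concl Atom} (hc : c ∈ P) : Licensed T P c := by
  obtain ⟨i, rfl⟩ := List.get_of_mem hc
  exact (hP i).mono fun x hx => List.mem_of_mem_take hx

theorem Prov.proves {Atom : Type} {T : DTheory Atom} {c : Concl Atom} (h : Prov T c) :
    DLProves T c := by
  obtain ⟨P, hP, hc⟩ := h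
  exact ⟨P ++ [c], hP.snoc (hP.licensed hc), by simp⟩

/-- No derivation contains complementary tags. -/
def Consis {Atom : Type} (P : List (Concl Atom)) : Prop :=
  ∀ q, ¬ (Concl.plusDelta q ∈ P ∧ Concl.minusDelta q ∈ P) ∧
    ¬ (Concl.plusPartial q ∈ P ∧ Concl.minusPartial q ∈ P)

theorem Consis.delta {Atom : Type} {T : DTheory Atom} {P : List (Concl Atom)} (hP : Consis P)
    {q : Lit Atom} (h1 : Licensed T P (.plusDelta q)) (h2 : Licensed T P (.minusDelta q)) :
    False := by
  rcases h1 with h | ⟨r, hr, hk, hh, hb⟩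
  · exact h2.1 h
  · obtain ⟨a, ha, hp⟩ := h2.2 r hr hk hh
    exact (hP a).1 ⟨hb a ha, hp⟩

theorem Consis.part {Atom : Type} {T : DTheory Atom} {P : List (Concl Atom)} (hP : Consis P)
    {q : Lit Atom} (h1 : Licensed T P (.plusPartial q)) (h2 : Licensed T P (.minusPartial q)) :
    False := by
  obtain ⟨h0, h2⟩ := h2
  rcases h1 with h | ⟨⟨r, hr, hk, hh, hb⟩, hd, hall⟩
  · exact (hP q).1 ⟨h, h0⟩
  · rcases h2 with h | h | ⟨s, hs1, hs2, hsb, hs⟩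
    · obtain ⟨a, ha, hp⟩ := h r hr hk hh
      exact (hP a).2 ⟨hb a ha, hp⟩
    · exact (hP _).1 ⟨h, hd⟩
    · rcases hall s hs1 hs2 with ⟨a, ha, hp⟩ | ⟨t, ht, g1, g2, g3, g4⟩
      · exact (hP a).2 ⟨hsb a ha, hp⟩
      · rcases hs t ht g1 g2 with ⟨a, ha, hp⟩ | h
        · exact (hP a).2 ⟨g4 a ha, hp⟩
        · exact h g3

theorem DLDerivation.consis {Atom : Type} {T : DTheory Atom} {P : List (Concl Atom)}
    (hP : DLDerivation T P) : Consis P := by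
  induction P using List.reverseRecOn with
  | nil => intro q; simp
  | append_singleton P c ih =>
    have hP' : DLDerivation T P := by simpa using hP.take P.length
    have hc : Licensed T P c := by
      have := hP ⟨P.length, by simp⟩
      simpa using this
    have hall : ∀ x ∈ P ++ [c], Licensed T P x := by
      intro x hx
      rcases List.mem_append.1 hx with hx | hx
      · exact hP'.licensed hx
      · rw [List.mem_singleton.1 hx]
        exact hc
    intro q
    exact ⟨fun h => (ih hP').delta (hall _ h.1) (hall _ h.2),
      fun h => (ih hP').part (hall _ h.1) (hall _ h.2)⟩

theorem exists_big {Atom : Type} (T : DTheory Atom) (L : List (Concl Atom)) :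
    ∃ P, DLDerivation T P ∧ ∀ c ∈ L, Prov T c → c ∈ P := by
  induction L with
  | nil => exact ⟨[], fun i => i.elim0, by simp⟩
  | cons d L ih =>
    obtain ⟨P, hP, h⟩ := ih
    by_cases hd : Prov T d
    · obtain ⟨Q, hQ, hdQ⟩ := hd
      refine ⟨P ++ Q, hP.append hQ, fun c hc hp => ?_⟩
      rcases List.mem_cons.1 hc with rfl | hc
      · exact List.mem_append_right _ hdQ
      · exact List.mem_append_left _ (h c hc hp)
    · refine ⟨P, hP, fun c hc hp => ?_⟩
      rcases List.mem_cons.1 hc with rfl | hc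
      · exact absurd hp hd
      · exact h c hc hp

/-- A single derivation deciding everything relevant to the literal `q`. -/
theorem exists_local {Atom : Type} [DecidableEq Atom] (T : DTheory Atom) (q : Lit Atom) :
    ∃ P, DLDerivation T P ∧ ∀ a : Lit Atom, (a = q ∨ a = q.compl ∨ ∃ r ∈ T.rules, a ∈ r.body) →
      (Prov T (.plusDelta a) ↔ .plusDelta a ∈ P) ∧ (Prov T (.minusDelta a) ↔ .minusDelta a ∈ P) ∧
      (Prov T (.plusPartial a) ↔ .plusPartial a ∈ P) ∧
      (Prov T (.minusPartial a) ↔ .minusPartial a ∈ P) := by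
  let S : List (Lit Atom) := q :: q.compl :: (T.rules.biUnion fun r => r.body).toList
  obtain ⟨P, hP, h⟩ := exists_big T (S.map .plusDelta ++ S.map .minusDelta ++
    S.map .plusPartial ++ S.map .minusPartial)
  refine ⟨P, hP, fun a ha => ?_⟩
  have haS : a ∈ S := by simpa [S] using ha
  refine ⟨⟨h _ ?_, fun h => ⟨P, hP, h⟩⟩, ⟨h _ ?_, fun h => ⟨P, hP, h⟩⟩,
    ⟨h _ ?_, fun h => ⟨P, hP, h⟩⟩, ⟨h _ ?_, fun h => ⟨P, hP, h⟩⟩⟩ <;>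
  simp [haS]

open Classical in
/-- The canonical interpretation. -/
noncomputable def canon {Atom : Type} (T : DTheory Atom) : DInterp Atom where
  del q := if Prov T (.plusDelta q) then some true
    else if Prov T (.minusDelta q) then some false else none
  par q := if Prov T (.plusPartial q) then some true
    else if Prov T (.minusPartial q) then some false else none

theorem canon_spec {Atom : Type} [DecidableEq Atom] (T : DTheory Atom) (q : Lit Atom) :
    ((canon T).del q = some true ↔ Prov T (.plusDelta q)) ∧
    ((canon T).del q = some false ↔ Prov T (.minusDelta q)) ∧
    ((canon T).par q = some true ↔ Prov T (.plusPartial q)) ∧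
    ((canon T).par q = some false ↔ Prov T (.minusPartial q)) := by
  obtain ⟨P, hP, h⟩ := exists_local T q
  obtain ⟨h1, h2, h3, h4⟩ := h q (Or.inl rfl)
  have hc := hP.consis q
  rw [← h1, ← h2, ← h3, ← h4] at hc
  simp only [canon]
  refine ⟨?_, ?_, ?_, ?_⟩ <;> split_ifs <;> simp <;> tauto

theorem canon_model {Atom : Type} [DecidableEq Atom] (T : DTheory Atom) :
    IsModel T (canon T) := by
  have key : ∀ q : Lit Atom, ∃ P,
      (Prov T (.plusDelta q) ↔ Licensed T P (.plusDelta q)) ∧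
      (Prov T (.minusDelta q) ↔ Licensed T P (.minusDelta q)) ∧
      (Prov T (.plusPartial q) ↔ Licensed T P (.plusPartial q)) ∧
      (Prov T (.minusPartial q) ↔ Licensed T P (.minusPartial q)) ∧
      ∀ a : Lit Atom, (a = q ∨ a = q.compl ∨ ∃ r ∈ T.rules, a ∈ r.body) →
      ((canon T).del a = some true ↔ .plusDelta a ∈ P) ∧
      ((canon T).del a = some false ↔ .minusDelta a ∈ P) ∧
      ((canon T).par a = some true ↔ .plusPartial a ∈ P) ∧
      ((canon T).par a = some false ↔ .minusPartial a ∈ P) := by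
    intro q
    obtain ⟨P, hP, h⟩ := exists_local T q
    obtain ⟨h1, h2, h3, h4⟩ := h q (Or.inl rfl)
    have back : ∀ c, Licensed T P c → Prov T c := fun c hc => ⟨P ++ [c], hP.snoc hc, by simp⟩
    refine ⟨P, ⟨fun g => hP.licensed (h1.1 g), back _⟩, ⟨fun g => hP.licensed (h2.1 g), back _⟩,
      ⟨fun g => hP.licensed (h3.1 g), back _⟩, ⟨fun g => hP.licensed (h4.1 g), back _⟩, ?_⟩
    intro a ha
    obtain ⟨g1, g2, g3, g4⟩ := canon_spec T a
    rw [g1, g2, g3, g4]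
    exact h a ha
  refine ⟨⟨fun q hq => ?_, fun q hq => ?_⟩, fun q => ?_, fun q => ?_, fun q => ?_, fun q => ?_⟩ <;>
    obtain ⟨P, k1, k2, k3, k4, h⟩ := key q <;>
    have hq1 := h q (Or.inl rfl) <;>
    have hq2 := h q.compl (Or.inr (Or.inl rfl)) <;>
    have hb : ∀ r ∈ T.rules, _ := fun r hr a ha => h a (Or.inr (Or.inr ⟨r, hr, ha⟩)) <;>
    have e1 : ∀ r ∈ T.rules, (kleeneAll (canon T).del r.body = some true ↔
      ∀ a ∈ r.body, .plusDelta a ∈ P) := fun r hr => (kleeneAll_true _ _).trans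
        (forall₂_congr fun a ha => (hb r hr a ha).1) <;>
    have e2 : ∀ r ∈ T.rules, (kleeneAll (canon T).del r.body = some false ↔
      ∃ a ∈ r.body, .minusDelta a ∈ P) := fun r hr => (kleeneAll_false _ _).trans
        (exists_congr fun a => and_congr_right fun ha => (hb r hr a ha).2.1) <;>
    have e3 : ∀ r ∈ T.rules, (kleeneAll (canon T).par r.body = some true ↔
      ∀ a ∈ r.body, .plusPartial a ∈ P) := fun r hr => (kleeneAll_true _ _).trans
        (forall₂_congr fun a ha => (hb r hr a ha).2.2.1) <;>
    have e4 : ∀ r ∈ T.rules, (kleeneAll (canon T).par r.body = some false ↔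
      ∃ a ∈ r.body, .minusPartial a ∈ P) := fun r hr => (kleeneAll_false _ _).trans
        (exists_congr fun a => and_congr_right fun ha => (hb r hr a ha).2.2.2)
  · rw [(canon_spec T q).2.2.1, k3]
    exact Or.inl (hq1.1.1 hq)
  · rw [(canon_spec T q).2.2.2, k4] at hq
    exact hq1.2.1.2 hq.1
  · rw [(canon_spec T q).1, k1]
    refine or_congr Iff.rfl (exists_congr fun r => and_congr_right fun hr => ?_)
    rw [e1 r hr]
  · rw [(canon_spec T q).2.1, k2]
    refine and_congr Iff.rfl (forall₂_congr fun r hr => ?_)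
    rw [e2 r hr]
  · rw [(canon_spec T q).2.2.1, k3, hq1.1, hq2.2.1]
    refine or_congr Iff.rfl (and_congr (exists_congr fun r => and_congr_right fun hr => ?_)
      (and_congr Iff.rfl (forall₂_congr fun s hs => imp_congr Iff.rfl
        (or_congr (e4 s hs).symm (exists_congr fun t => and_congr_right fun ht => ?_)))))
    · rw [e3 r hr]
    · rw [e3 t ht]
      exact ⟨fun ⟨x, y, z, w⟩ => ⟨x, y, w, z⟩, fun ⟨x, y, z, w⟩ => ⟨x, y, w, z⟩⟩
  · rw [(canon_spec T q).2.2.2, k4, hq1.2.1, hq2.1]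
    refine and_congr Iff.rfl (or_congr (forall₂_congr fun r hr => ?_) (or_congr Iff.rfl
      (exists_congr fun s => and_congr_right fun hs => and_congr Iff.rfl
        (and_congr (e3 s hs).symm (forall₂_congr fun t ht => ?_)))))
    · rw [e4 r hr]
    · rw [e4 t ht]

/-- Completeness of DL: every conclusion holding in all defeasible models is provable. -/
theorem DL_completeness {Atom : Type} [Countable Atom] [DecidableEq Atom]
    (T : DTheory Atom) (hacyc : SupAcyclic T) (c : Concl Atom)
    (h : ∀ I : DInterp Atom, IsModel T I → DLHolds I c) :
    DLProves T c := by
  have hc := h _ (canon_model T)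
  apply Prov.proves
  cases c with
  | plusDelta q => exact (canon_spec T q).1.1 hc
  | minusDelta q => exact (canon_spec T q).2.1.1 hc
  | plusPartial q => exact (canon_spec T q).2.2.1.1 hc
  | minusPartial q => exact (canon_spec T q).2.2.2.1 hc
end

section
/- Paraconsistency of DL: let a and b be distinct atoms and let T be the propositional defeasible theory with facts F={a, ¬a}, a single strict rule r: {b} → b, and empty superiority relation. Then T ⊢ +Δa, T ⊢ +Δ¬a, T ⊢ +∂a, and T ⊢ +∂¬a, but none of +Δb, -Δb, +∂b, -∂b is provable in T; in particular, the inconsistency concerning a does not make b provable (no ex falso quodlibet). -/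
/-- Paraconsistency of DL: with facts {a, ¬a} and the single strict rule b → b,
both a and ¬a are definitely and defeasibly provable, but none of the four
conclusions about b is provable: no ex falso quodlibet. -/
theorem DL_paraconsistency {Atom : Type} [Countable Atom] [DecidableEq Atom]
    (a b : Atom) (hab : a ≠ b) (T : DTheory Atom)
    (hT : T = ⟨{Lit.pos a, Lit.neg a},
               {⟨RuleKind.strict, {Lit.pos b}, Lit.pos b⟩},
               fun _ _ => False⟩) :
    (DLProves T (Concl.plusDelta (Lit.pos a)) ∧
     DLProves T (Concl.plusDelta (Lit.neg a)) ∧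
     DLProves T (Concl.plusPartial (Lit.pos a)) ∧
     DLProves T (Concl.plusPartial (Lit.neg a))) ∧
    (¬ DLProves T (Concl.plusDelta (Lit.pos b)) ∧
     ¬ DLProves T (Concl.minusDelta (Lit.pos b)) ∧
     ¬ DLProves T (Concl.plusPartial (Lit.pos b)) ∧
     ¬ DLProves T (Concl.minusPartial (Lit.pos b))) := by
  subst hT
  have key : ∀ P : List (Concl Atom), DLDerivation (⟨{Lit.pos a, Lit.neg a},
               {⟨RuleKind.strict, {Lit.pos b}, Lit.pos b⟩},
               fun _ _ => False⟩ : DTheory Atom) P → ∀ n, ∀ h : n < P.length,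
      P[n] ≠ Concl.plusDelta (Lit.pos b) ∧ P[n] ≠ Concl.minusDelta (Lit.pos b) ∧
      P[n] ≠ Concl.plusPartial (Lit.pos b) ∧ P[n] ≠ Concl.minusPartial (Lit.pos b) := by
    intro P hP n
    induction n using Nat.strong_induction_on with
    | _ n ih =>
    intro h
    have hL := hP ⟨n, h⟩
    have hprev : ∀ c ∈ P.take n, c ≠ Concl.plusDelta (Lit.pos b) ∧
        c ≠ Concl.minusDelta (Lit.pos b) ∧
        c ≠ Concl.plusPartial (Lit.pos b) ∧ c ≠ Concl.minusPartial (Lit.pos b) := by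
      intro c hc
      obtain ⟨m, hm, rfl⟩ := List.mem_iff_getElem.1 hc
      rw [List.length_take] at hm
      rw [List.getElem_take]
      exact ih m (by omega) (by omega)
    have h1 : Concl.plusDelta (Lit.pos b) ∉ P.take n := fun hc => (hprev _ hc).1 rfl
    have h2 : Concl.minusDelta (Lit.pos b) ∉ P.take n := fun hc => (hprev _ hc).2.1 rfl
    have h3 : Concl.plusPartial (Lit.pos b) ∉ P.take n := fun hc => (hprev _ hc).2.2.1 rfl
    simp only [List.get_eq_getElem] at hL
    refine ⟨?_, ?_, ?_, ?_⟩ <;> intro he <;> rw [he] at hL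
    · simp [Licensed, h1, hab.symm] at hL
    · simp [Licensed, h2] at hL
    · simp [Licensed, h1, h3] at hL
    · simp [Licensed, h2] at hL
  have key2 : ∀ c, DLProves (⟨{Lit.pos a, Lit.neg a},
               {⟨RuleKind.strict, {Lit.pos b}, Lit.pos b⟩},
               fun _ _ => False⟩ : DTheory Atom) c →
      c ≠ Concl.plusDelta (Lit.pos b) ∧ c ≠ Concl.minusDelta (Lit.pos b) ∧
      c ≠ Concl.plusPartial (Lit.pos b) ∧ c ≠ Concl.minusPartial (Lit.pos b) := by
    rintro c ⟨P, hP, hl⟩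
    obtain ⟨m, hm, rfl⟩ := List.mem_iff_getElem.1 (List.mem_of_getLast? hl)
    exact key P hP m hm
  refine ⟨⟨⟨[Concl.plusDelta (Lit.pos a)], ?_, rfl⟩, ⟨[Concl.plusDelta (Lit.neg a)], ?_, rfl⟩,
    ⟨[Concl.plusDelta (Lit.pos a), Concl.plusPartial (Lit.pos a)], ?_, rfl⟩,
    ⟨[Concl.plusDelta (Lit.neg a), Concl.plusPartial (Lit.neg a)], ?_, rfl⟩⟩,
    fun h => (key2 _ h).1 rfl, fun h => (key2 _ h).2.1 rfl,
    fun h => (key2 _ h).2.2.1 rfl, fun h => (key2 _ h).2.2.2 rfl⟩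
  all_goals
    intro i
    fin_cases i <;> simp [Licensed]
end
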